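/- Let S be an eventually regular, conditionally completely regular semigroup, let e ∈ S be idempotent, and let s ∈ S be such that s^n ℋ e for some n ≥ 1 (i.e. s ∈ K_e). Then the 𝒥-class of e is the greatest 𝒥-class containing a weak inverse of s: there exists a weak inverse s' of s with s' 𝒥 e, and for every weak inverse s' of s, the principal two-sided ideal {s'} ∪ Ss' ∪ s'S ∪ Ss'S is contained in {e} ∪ Se ∪ eS ∪ SeS. -/

import Mathlib

/-- Green's relation ℒ: `s ℒ t` iff `{s} ∪ Ss = {t} ∪ St`. -/
def LRel {S : Type*} [Semigroup S] (s t : S) : Prop :=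
  ({s} ∪ {x | ∃ a : S, x = a * s} : Set S) = ({t} ∪ {x | ∃ a : S, x = a * t} : Set S)

/-- Green's relation ℛ: `s ℛ t` iff `{s} ∪ sS = {t} ∪ tS`. -/
def RRel {S : Type*} [Semigroup S] (s t : S) : Prop :=
  ({s} ∪ {x | ∃ a : S, x = s * a} : Set S) = ({t} ∪ {x | ∃ a : S, x = t * a} : Set S)

/-- Green's relation ℋ = ℒ ∩ ℛ. -/
def HRel {S : Type*} [Semigroup S] (s t : S) : Prop := LRel s t ∧ RRel s t

/-- Green's relation 𝒟: `s 𝒟 t` iff `∃ u, s ℒ u` and `u ℛ t`. -/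
def DRel {S : Type*} [Semigroup S] (s t : S) : Prop := ∃ u : S, LRel s u ∧ RRel u t

/-- An element `s` is regular if `s = s * x * s` for some `x`. -/
def IsRegularElem {S : Type*} [Semigroup S] (s : S) : Prop := ∃ x : S, s = s * x * s

/-- `S` is conditionally completely regular if every regular element is
ℋ-related to an idempotent. -/
def CondCompletelyRegular (S : Type*) [Semigroup S] : Prop :=
  ∀ s : S, IsRegularElem s → ∃ e : S, e * e = e ∧ HRel s e

/-- `spow s n` is the power `s^(n+1)`, so that `spow s n` ranges over all
positive powers of `s` as `n` ranges over `ℕ`. -/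
def spow {S : Type*} [Semigroup S] (s : S) : ℕ → S
  | 0 => s
  | n + 1 => spow s n * s

/-- The principal two-sided ideal generated by `s`: `{s} ∪ Ss ∪ sS ∪ SsS`. -/
def principalIdeal {S : Type*} [Semigroup S] (s : S) : Set S :=
  {s} ∪ {x | ∃ a : S, x = a * s} ∪ {x | ∃ a : S, x = s * a} ∪
    {x | ∃ a b : S, x = a * s * b}

/-- Green's relation 𝒥: equality of principal two-sided ideals. -/
def JRel {S : Type*} [Semigroup S] (s t : S) : Prop := principalIdeal s = principalIdeal t

/-!
Let `z` be a weak inverse of `s`. The element `u = szs` is regular, hence `u = du²` for some `d`,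
and `z = zuz = zdu²z = (zdsz)s²z`. So `w = zdsz` is a weak inverse of `s²` with `z` in its principal
ideal. Passing from `s` to `s²` repeatedly puts `z` in the principal ideal of every power of `s`, in
particular of one that is 𝒥-related to `e`. Conversely, if `e = psq` is idempotent, then `qep` is a
weak inverse of `s` in the 𝒥-class of `e`.
-/

section WeakInverse

variable {S : Type*} [Semigroup S] {e s t x y z : S}

/-- `z` is a weak inverse of `s`, i.e. `z = z * s * z`. This names the condition that the main
theorem spells out; the element being inverted comes first. -/
def IsWeakInverse (s z : S) : Prop := z = z * s * z

theorem mem_principalIdeal_self (s : S) : s ∈ principalIdeal s :=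
  Or.inl (Or.inl (Or.inl rfl))

theorem mul_left_mem_principalIdeal (a : S) (hx : x ∈ principalIdeal s) :
    a * x ∈ principalIdeal s := by
  rcases hx with ((rfl | ⟨b, rfl⟩) | ⟨c, rfl⟩) | ⟨b, c, rfl⟩
  · exact Or.inl (Or.inl (Or.inr ⟨a, rfl⟩))
  · exact Or.inl (Or.inl (Or.inr ⟨a * b, (mul_assoc a b s).symm⟩))
  · exact Or.inr ⟨a, c, (mul_assoc a s c).symm⟩
  · exact Or.inr ⟨a * b, c, by simp only [mul_assoc]⟩

theorem mul_right_mem_principalIdeal (hx : x ∈ principalIdeal s) (a : S) :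
    x * a ∈ principalIdeal s := by
  rcases hx with ((rfl | ⟨b, rfl⟩) | ⟨c, rfl⟩) | ⟨b, c, rfl⟩
  · exact Or.inl (Or.inr ⟨a, rfl⟩)
  · exact Or.inr ⟨b, a, rfl⟩
  · exact Or.inl (Or.inr ⟨c * a, mul_assoc s c a⟩)
  · exact Or.inr ⟨b, c * a, mul_assoc (b * s) c a⟩

theorem mul_mul_mem_principalIdeal (a s b : S) : a * s * b ∈ principalIdeal s :=
  Or.inr ⟨a, b, rfl⟩

theorem principalIdeal_subset_of_mem (hx : x ∈ principalIdeal y) :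
    principalIdeal x ⊆ principalIdeal y := by
  rintro _ (((rfl | ⟨a, rfl⟩) | ⟨b, rfl⟩) | ⟨a, b, rfl⟩)
  · exact hx
  · exact mul_left_mem_principalIdeal a hx
  · exact mul_right_mem_principalIdeal hx b
  · exact mul_right_mem_principalIdeal (mul_left_mem_principalIdeal a hx) b

theorem jRel_of_mem_of_mem (hst : s ∈ principalIdeal t) (hts : t ∈ principalIdeal s) :
    JRel s t :=
  (principalIdeal_subset_of_mem hst).antisymm (principalIdeal_subset_of_mem hts)

theorem LRel.eq_or_exists_eq_mul (h : LRel s t) : s = t ∨ ∃ a, s = a * t :=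
  h.subset (Or.inl rfl)

theorem RRel.eq_or_exists_eq_mul (h : RRel s t) : s = t ∨ ∃ a, s = t * a :=
  h.subset (Or.inl rfl)

theorem LRel.mem_principalIdeal (h : LRel s t) : s ∈ principalIdeal t :=
  Or.inl (Or.inl h.eq_or_exists_eq_mul)

theorem LRel.symm (h : LRel s t) : LRel t s := Eq.symm h

theorem LRel.jRel (h : LRel s t) : JRel s t :=
  jRel_of_mem_of_mem h.mem_principalIdeal h.symm.mem_principalIdeal

theorem LRel.exists_mul_eq_of_isIdempotentElem (h : LRel s e) (he : IsIdempotentElem e) :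
    ∃ a, a * s = e := by
  rcases h.symm.eq_or_exists_eq_mul with rfl | ⟨a, ha⟩
  · exact ⟨e, he⟩
  · exact ⟨a, ha.symm⟩

theorem RRel.mul_eq_of_isIdempotentElem (h : RRel s e) (he : IsIdempotentElem e) :
    e * s = s := by
  rcases h.eq_or_exists_eq_mul with rfl | ⟨a, rfl⟩
  · exact he
  · rw [← mul_assoc, he.eq]

theorem CondCompletelyRegular.exists_mul_mul_self_eq (hS : CondCompletelyRegular S)
    (hx : IsRegularElem x) : ∃ d, d * (x * x) = x := by
  obtain ⟨f, hf, hL, hR⟩ := hS x hx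
  obtain ⟨d, hd⟩ := hL.exists_mul_eq_of_isIdempotentElem hf
  exact ⟨d, by rw [← mul_assoc, hd, hR.mul_eq_of_isIdempotentElem hf]⟩

theorem spow_mem_principalIdeal_spow (s : S) {m n : ℕ} (hmn : m ≤ n) :
    spow s n ∈ principalIdeal (spow s m) := by
  induction n, hmn using Nat.le_induction with
  | base => exact mem_principalIdeal_self _
  | succ n _ ih => exact mul_right_mem_principalIdeal ih s

theorem spow_mul_self (s : S) (n : ℕ) : spow (s * s) n = spow s (2 * n + 1) := by
  induction n with
  | zero => rfl
  | succ n ih =>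
    calc spow (s * s) n * (s * s) = spow s (2 * n + 1) * s * s := by rw [ih, mul_assoc]
      _ = spow s (2 * (n + 1) + 1) := rfl

theorem IsWeakInverse.isRegularElem_mul_mul (hz : IsWeakInverse s z) :
    IsRegularElem (s * z * s) :=
  ⟨z, calc
    s * z * s = s * (z * s * z * s * z) * s := by rw [← hz, ← hz]
    _ = s * z * s * z * (s * z * s) := by simp only [mul_assoc]⟩

theorem isWeakInverse_mul_of_mul_mul_eq (h : z * y * s * z = z) : IsWeakInverse s (z * y) :=
  calc
    z * y = z * y * s * z * y := by rw [h]
    _ = z * y * s * (z * y) := mul_assoc _ _ _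

theorem IsWeakInverse.exists_mul_mul_mul_self_mul_eq (hS : CondCompletelyRegular S)
    (hz : IsWeakInverse s z) : ∃ y, z * y * (s * s) * z = z := by
  obtain ⟨d, hd⟩ := hS.exists_mul_mul_self_eq hz.isRegularElem_mul_mul
  have hzsz : z * s * z = z := hz.symm
  refine ⟨d * s * z, ?_⟩
  calc z * (d * s * z) * (s * s) * z
      = z * (d * s * z) * (s * s) * (z * s * z) := by rw [hzsz]
    _ = z * (d * (s * z * s * (s * z * s))) * z := by simp only [mul_assoc]
    _ = z * s * z * s * z := by rw [hd]; simp only [mul_assoc]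
    _ = z := by rw [hzsz, hzsz]

theorem IsWeakInverse.exists_isWeakInverse_mul_self (hS : CondCompletelyRegular S)
    (hz : IsWeakInverse s z) : ∃ w, IsWeakInverse (s * s) w ∧ z ∈ principalIdeal w := by
  obtain ⟨y, hy⟩ := hz.exists_mul_mul_mul_self_mul_eq hS
  refine ⟨z * y, isWeakInverse_mul_of_mul_mul_eq hy, ?_⟩
  have hmem : z * y * (s * s) * z ∈ principalIdeal (z * y) :=
    mul_right_mem_principalIdeal
      (mul_right_mem_principalIdeal (mem_principalIdeal_self _) _) _
  rwa [hy] at hmem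

theorem IsWeakInverse.mem_principalIdeal_spow (hS : CondCompletelyRegular S)
    (hz : IsWeakInverse s z) (n : ℕ) : z ∈ principalIdeal (spow s n) := by
  induction n generalizing s z with
  | zero => exact hz ▸ mul_mul_mem_principalIdeal z s z
  | succ n ih =>
    obtain ⟨w, hw, hzw⟩ := hz.exists_isWeakInverse_mul_self hS
    have hws : w ∈ principalIdeal (spow s (2 * n + 1)) := spow_mul_self s n ▸ ih hw
    have hpow : spow s (2 * n + 1) ∈ principalIdeal (spow s (n + 1)) :=
      spow_mem_principalIdeal_spow s (by omega)
    exact principalIdeal_subset_of_mem hpow (principalIdeal_subset_of_mem hws hzw)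

theorem exists_mul_mul_eq_of_mem_principalIdeal (he : IsIdempotentElem e)
    (hes : e ∈ principalIdeal s) : ∃ p q, p * s * q = e := by
  rcases hes with ((rfl | ⟨a, rfl⟩) | ⟨b, rfl⟩) | ⟨a, b, rfl⟩
  · exact ⟨e, e, by rw [he.eq, he.eq]⟩
  · exact ⟨a, a * s, he⟩
  · exact ⟨s * b, b, by rw [mul_assoc, he.eq]⟩
  · exact ⟨a, b, rfl⟩

theorem exists_isWeakInverse_jRel (he : IsIdempotentElem e) (hes : e ∈ principalIdeal s) :
    ∃ z, IsWeakInverse s z ∧ JRel z e := by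
  obtain ⟨p, q, hpq⟩ := exists_mul_mul_eq_of_mem_principalIdeal he hes
  refine ⟨q * e * p, ?_, jRel_of_mem_of_mem (mul_mul_mem_principalIdeal q e p) ?_⟩
  · calc q * e * p = q * (e * e * e) * p := by rw [he.eq, he.eq]
      _ = q * (e * (p * s * q) * e) * p := by rw [hpq]
      _ = q * e * p * s * (q * e * p) := by simp only [mul_assoc]
  · have hpz : p * s * (q * e * p) * (s * q) = e :=
      calc p * s * (q * e * p) * (s * q) = p * s * q * e * (p * s * q) := by
            simp only [mul_assoc]
        _ = e := by rw [hpq, he.eq, he.eq]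
    have hmem := mul_mul_mem_principalIdeal (p * s) (q * e * p) (s * q)
    rwa [hpz] at hmem

theorem stmt18_general (hS : CondCompletelyRegular S) (he : IsIdempotentElem e)
    (hs : ∃ n, JRel (spow s n) e) :
    (∃ z, IsWeakInverse s z ∧ JRel z e) ∧
      ∀ z, IsWeakInverse s z → principalIdeal z ⊆ principalIdeal e := by
  obtain ⟨n, hn⟩ := hs
  have hes : e ∈ principalIdeal s :=
    principalIdeal_subset_of_mem (spow_mem_principalIdeal_spow s n.zero_le)
      (hn.superset (mem_principalIdeal_self e))
  exact ⟨exists_isWeakInverse_jRel he hes, fun z hz =>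
    (principalIdeal_subset_of_mem (hz.mem_principalIdeal_spow hS n)).trans hn.subset⟩

end WeakInverse

/-- In an eventually regular, conditionally completely regular semigroup, if
`e` is idempotent and some positive power of `s` is ℋ-related to `e`
(`s ∈ K_e`), then `J_e` is the greatest 𝒥-class containing a weak inverse of
`s`: some weak inverse of `s` is 𝒥-related to `e`, and every weak inverse of
`s` generates a principal ideal contained in that of `e`. -/
theorem stmt18 {S : Type*} [Semigroup S]
    (hER : ∀ a : S, ∃ n : ℕ, IsRegularElem (spow a n))
    (hS : CondCompletelyRegular S)
    (e : S) (he : e * e = e) (s : S) (hs : ∃ n : ℕ, HRel (spow s n) e) :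
    (∃ z : S, z = z * s * z ∧ JRel z e) ∧
      (∀ z : S, z = z * s * z → principalIdeal z ⊆ principalIdeal e) :=
  stmt18_general hS he (hs.imp fun _ h => h.1.jRel)
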